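/- Under the inductive Gevrey bounds on h, there is a constant c₁ ≥ 1 depending only on s and on finitely many low-order Hölder norms of h (e.g. ‖h‖₄ and ‖h_q‖_{2,μ}), but not on m, n, L₁, L₂, such that for α = (α₁,α₂) = (m−n, n): Σ_{γ≤α, γ≠0} C(α,γ) ‖∂^γ(h_q²)‖₀ ‖∂^{α−γ} h_{pp}‖₀ ≤ c₁ L₁^{α₁−2} L₂^{α₂} [(|α|−2)!]^s, where C(α,γ) = α!/(γ!(α−γ)!) and the sum is over multi-indices γ ≤ α with γ ≠ 0. -/

import Mathlib

open Set

noncomputable section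

/-- The closed strip `R̄ = ℝ × [p₀, 0]`. -/
def Strip (p₀ : ℝ) : Set (ℝ × ℝ) := {z : ℝ × ℝ | p₀ ≤ z.2 ∧ z.2 ≤ 0}

/-- The mixed partial derivative `∂_q^a ∂_p^b f` of `f : ℝ² → ℝ` within the set `S`,
realized as the iterated Fréchet derivative within `S` applied to the corresponding
coordinate directions. -/
def mpw (S : Set (ℝ × ℝ)) (a b : ℕ) (f : ℝ × ℝ → ℝ) (z : ℝ × ℝ) : ℝ :=
  iteratedFDerivWithin ℝ (a + b) f S z
    (fun i => if (i : ℕ) < a then ((1 : ℝ), (0 : ℝ)) else ((0 : ℝ), (1 : ℝ)))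

/-- `∂_q^a ∂_p^b f` within the strip `R̄`. -/
def pd (p₀ : ℝ) (a b : ℕ) (f : ℝ × ℝ → ℝ) : ℝ × ℝ → ℝ := mpw (Strip p₀) a b f

/-- Euclidean distance on `ℝ²`. -/
def edist2 (z z' : ℝ × ℝ) : ℝ := Real.sqrt ((z.1 - z'.1) ^ 2 + (z.2 - z'.2) ^ 2)

/-- `sup_{R̄} |f|`. -/
def supS (p₀ : ℝ) (f : ℝ × ℝ → ℝ) : ℝ := sSup ((fun z => |f z|) '' Strip p₀)

/-- The Hölder seminorm of exponent `μ` of `f` over the strip `R̄`. -/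
def hsemi (p₀ μ : ℝ) (f : ℝ × ℝ → ℝ) : ℝ :=
  sSup {y | ∃ z ∈ Strip p₀, ∃ z' ∈ Strip p₀, z ≠ z' ∧ y = |f z - f z'| / (edist2 z z') ^ μ}

/-- The `C^k` sup-norm `‖f‖_k = Σ_{|α| ≤ k} sup_{R̄} |∂^α f|`. -/
def cknorm (p₀ : ℝ) (k : ℕ) (f : ℝ × ℝ → ℝ) : ℝ :=
  ∑ a ∈ Finset.range (k + 1), ∑ b ∈ Finset.range (k + 1 - a), supS p₀ (pd p₀ a b f)

/-- The Hölder norm `‖f‖_{k,μ} = ‖f‖_k + max_{|α| = k} [∂^α f]_μ`. -/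
def hnorm (p₀ μ : ℝ) (k : ℕ) (f : ℝ × ℝ → ℝ) : ℝ :=
  cknorm p₀ k f + sSup {y | ∃ a b : ℕ, a + b = k ∧ y = hsemi p₀ μ (pd p₀ a b f)}

/-- Boundedness of `f` on the strip (finiteness of `sup_{R̄} |f|`). -/
def bddS (p₀ : ℝ) (f : ℝ × ℝ → ℝ) : Prop := BddAbove ((fun z => |f z|) '' Strip p₀)

/-- Finiteness of the Hölder seminorm of `f` on the strip. -/
def bddH (p₀ μ : ℝ) (f : ℝ × ℝ → ℝ) : Prop :=
  BddAbove {y | ∃ z ∈ Strip p₀, ∃ z' ∈ Strip p₀, z ≠ z' ∧ y = |f z - f z'| / (edist2 z z') ^ μ}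

/-- Finiteness of the `C^{k,μ}(R̄)` norm. -/
def finCk (p₀ μ : ℝ) (k : ℕ) (f : ℝ × ℝ → ℝ) : Prop :=
  (∀ a b : ℕ, a + b ≤ k → bddS p₀ (pd p₀ a b f)) ∧
  (∀ a b : ℕ, a + b = k → bddH p₀ μ (pd p₀ a b f))

/-- Membership in `C^{k,μ}(R̄)`: `k` times continuously differentiable on the strip with
bounded derivatives, the top-order ones Hölder continuous of exponent `μ`. -/
def MemCk (p₀ μ : ℝ) (k : ℕ) (f : ℝ × ℝ → ℝ) : Prop :=
  ContDiffOn ℝ k f (Strip p₀) ∧ finCk p₀ μ k f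

/-- The inductive Gevrey bounds on `h`:
(i) `‖∂^γ h‖₂ ≤ L₁^{γ₁−1} L₂^{γ₂} [(|γ|−2)!]^s` for `2 ≤ |γ| ≤ m−1`;
(ii) `‖∂_q^{m−i}∂_p^i h‖₂ ≤ L₁^{m−i−1} L₂^i [(m−2)!]^s` for `0 ≤ i ≤ n−1`. -/
def IndBounds (p₀ s L₁ L₂ : ℝ) (m n : ℕ) (h : ℝ × ℝ → ℝ) : Prop :=
  (∀ g1 g2 : ℕ, 2 ≤ g1 + g2 → g1 + g2 ≤ m - 1 →
    cknorm p₀ 2 (pd p₀ g1 g2 h) ≤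
      L₁ ^ ((g1 : ℤ) - 1) * L₂ ^ g2 * (Nat.factorial (g1 + g2 - 2) : ℝ) ^ s) ∧
  (∀ i : ℕ, i < n →
    cknorm p₀ 2 (pd p₀ (m - i) i h) ≤
      L₁ ^ ((m : ℤ) - (i : ℤ) - 1) * L₂ ^ i * (Nat.factorial (m - 2) : ℝ) ^ s)

/-!
On functions smooth on the strip `∂_q` and `∂_p` are commuting derivations, so the Leibniz rule
bounds the derivatives of a product by a sum over multi-indices. Summing over `|γ| = k` first,
Vandermonde's identity turns `C(α,γ)` into `C(N,k)` with `N = |α|`, and everything rests on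
`∑ C(N,k) (k-2)! (N-k-2)! ≤ 200 (N-2)!`: the `k`-th term is of size
`N! / ((k+1)² (N-k+1)²)`, and `1/(xy) = (1/x + 1/y)/(x + y)` extracts the factor `1/(N+2)²`. Since
`(k-2)! (N-k-2)! ≤ (N-2)!`, the same bound holds with all factorials raised to a power `s ≥ 1`.

It remains to count powers of `L₁`. A high derivative of `h_q` or of `h_pp` is a second derivative
of some `∂^γ h` covered by the inductive bounds, which gives a gain of `L₁⁻²` for `h_q` and of
`L₁⁻¹` for `h_pp`; the product rule passes the gain `L₁⁻²` on to `h_q²`. Low orders gain less, but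
since `γ ≠ 0` and `|α| ≥ 2` every term of the sum still gains `L₁⁻²`.
-/

open scoped Nat

section Leibniz

theorem derivation_pow_mul {R A : Type*} [CommSemiring R] [CommSemiring A] [Algebra R A]
    (D : Derivation R A A) (n : ℕ) (a b : A) :
    ((D : Module.End R A) ^ n) (a * b) =
      ∑ k ∈ Finset.range (n + 1), (n.choose k : A) *
        (((D : Module.End R A) ^ k) a * ((D : Module.End R A) ^ (n - k)) b) := by
  induction n generalizing a b with
  | zero => simp
  | succ n ih =>
    rw [Finset.sum_choose_succ_mul
      fun i j => ((D : Module.End R A) ^ i) a * ((D : Module.End R A) ^ j) b]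
    have hsplit : ∑ k ∈ Finset.range (n + 1), (n.choose k : A) *
          (((D : Module.End R A) ^ k) a * ((D : Module.End R A) ^ (n + 1 - k)) b) =
        ∑ k ∈ Finset.range (n + 1), (n.choose k : A) *
          (((D : Module.End R A) ^ k) a * ((D : Module.End R A) ^ (n - k)) (D b)) :=
      Finset.sum_congr rfl fun k hk => by
        rw [Nat.succ_sub (Finset.mem_range_succ_iff.1 hk), pow_succ, Module.End.mul_apply,
          Derivation.coeFn_coe]
    simp only [hsplit, pow_succ, Module.End.mul_apply, Derivation.coeFn_coe, Derivation.leibniz,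
      smul_eq_mul, mul_comm b, map_add, ih]

end Leibniz

section SmoothOn

variable {E : Type*} [NormedAddCommGroup E] [NormedSpace ℝ E] {S : Set E}

/-- The algebra of real functions on `E` that are smooth on `S`; their values off `S` are
arbitrary. -/
def smoothOn (S : Set E) : Subalgebra ℝ (E → ℝ) where
  carrier := {f | ContDiffOn ℝ (⊤ : ℕ∞) f S}
  mul_mem' := ContDiffOn.mul
  add_mem' := ContDiffOn.add
  algebraMap_mem' _ := contDiffOn_const

theorem smoothOn.contDiffOn (f : smoothOn S) : ContDiffOn ℝ (⊤ : ℕ∞) (f : E → ℝ) S := f.2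

theorem smoothOn.differentiableOn (f : smoothOn S) : DifferentiableOn ℝ (f : E → ℝ) S :=
  (smoothOn.contDiffOn f).differentiableOn (by simp)

theorem smoothOn.contDiffOn_fderivWithin (hS : UniqueDiffOn ℝ S) (f : smoothOn S) :
    ContDiffOn ℝ (⊤ : ℕ∞) (fderivWithin ℝ (f : E → ℝ) S) S :=
  (smoothOn.contDiffOn f).fderivWithin hS (by norm_cast)

/-- The derivative within `S` in the direction `v`, as a derivation of the algebra of functions
smooth on `S`. It is cut off to `0` outside `S`, where `fderivWithin` need not be additive. -/
def dirDeriv (hS : UniqueDiffOn ℝ S) (v : E) : Derivation ℝ (smoothOn S) (smoothOn S) :=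
  Derivation.mk'
    { toFun f := ⟨S.indicator fun z => fderivWithin ℝ (f : E → ℝ) S z v,
        ((smoothOn.contDiffOn_fderivWithin hS f).clm_apply contDiffOn_const).congr fun _ hz =>
          indicator_of_mem hz _⟩
      map_add' f g := by
        ext z
        by_cases hz : z ∈ S
        · simp [hz, fderivWithin_add (hS z hz)
            (smoothOn.differentiableOn f z hz) (smoothOn.differentiableOn g z hz)]
        · simp [hz]
      map_smul' c f := by
        ext z
        by_cases hz : z ∈ S
        · simp [hz, fderivWithin_const_smul (hS z hz) (smoothOn.differentiableOn f z hz) c]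
        · simp [hz] }
    fun f g => by
      ext z
      by_cases hz : z ∈ S
      · simp [hz, fderivWithin_mul (hS z hz)
          (smoothOn.differentiableOn f z hz) (smoothOn.differentiableOn g z hz)]
      · simp [hz]

variable (hS : UniqueDiffOn ℝ S)

theorem dirDeriv_apply_of_mem (v : E) (f : smoothOn S) {z : E} (hz : z ∈ S) :
    (dirDeriv hS v f : E → ℝ) z = fderivWithin ℝ (f : E → ℝ) S z v := by
  simp [dirDeriv, hz]

theorem dirDeriv_apply_of_notMem (v : E) (f : smoothOn S) {z : E} (hz : z ∉ S) :
    (dirDeriv hS v f : E → ℝ) z = 0 := by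
  simp [dirDeriv, hz]

theorem dirDeriv_dirDeriv_apply_of_mem (v w : E) (f : smoothOn S) {z : E} (hz : z ∈ S) :
    (dirDeriv hS v (dirDeriv hS w f) : E → ℝ) z =
      fderivWithin ℝ (fderivWithin ℝ (f : E → ℝ) S) S z v w := by
  rw [dirDeriv_apply_of_mem hS v _ hz,
    fderivWithin_congr (fun _ => dirDeriv_apply_of_mem hS w f) (dirDeriv_apply_of_mem hS w f hz),
    fderivWithin_clm_apply (hS z hz)
      ((smoothOn.contDiffOn_fderivWithin hS f).differentiableOn (by simp) z hz)
      (differentiableWithinAt_const _)]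
  simp

theorem commute_dirDeriv (hcl : S ⊆ closure (interior S)) (v w : E) :
    Commute (dirDeriv hS v : Module.End ℝ (smoothOn S)) (dirDeriv hS w) := by
  refine LinearMap.ext fun f => Subtype.ext <| funext fun z => ?_
  simp only [Module.End.mul_apply, Derivation.coeFn_coe]
  by_cases hz : z ∈ S
  · rw [dirDeriv_dirDeriv_apply_of_mem hS v w f hz, dirDeriv_dirDeriv_apply_of_mem hS w v f hz]
    have hsymm : IsSymmSndFDerivWithinAt ℝ (f : E → ℝ) S z :=
      (smoothOn.contDiffOn f z hz).isSymmSndFDerivWithinAt (by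
        rw [minSmoothness_of_isRCLikeNormedField]
        norm_cast) hS (hcl hz) hz
    exact hsymm.eq v w
  · simp only [dirDeriv_apply_of_notMem hS _ _ hz]

theorem iteratedFDerivWithin_eqOn_prod_dirDeriv (f : smoothOn S) {N : ℕ} (v : Fin N → E) :
    EqOn (fun z => iteratedFDerivWithin ℝ N (f : E → ℝ) S z v)
      ((List.ofFn fun i => (dirDeriv hS (v i) : Module.End ℝ (smoothOn S))).prod f : smoothOn S)
      S := by
  induction N with
  | zero => intro z _; simp
  | succ N ih =>
    intro z hz
    have hdiff := (smoothOn.contDiffOn f).differentiableOn_iteratedFDerivWithin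
      (by exact_mod_cast ENat.natCast_lt_top N) hS z hz
    simp only [iteratedFDerivWithin_succ_apply_left, List.ofFn_succ, List.prod_cons,
      Module.End.mul_apply, Derivation.coeFn_coe, dirDeriv_apply_of_mem hS _ _ hz,
      ← fderivWithin_continuousMultilinear_apply_const_apply (hS z hz) hdiff]
    exact DFunLike.congr_fun (fderivWithin_congr (ih (Fin.tail v)) (ih (Fin.tail v) hz)) (v 0)

end SmoothOn

section MixedPartial

variable {S : Set (ℝ × ℝ)} (hS : UniqueDiffOn ℝ S)

/-- The operator `∂_q^a ∂_p^b` on functions smooth on `S ⊆ ℝ²`; the operator form of `mpw`. -/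
def mixedPartial (a b : ℕ) : Module.End ℝ (smoothOn S) :=
  (dirDeriv hS (1, 0) : Module.End ℝ (smoothOn S)) ^ a * (dirDeriv hS (0, 1)) ^ b

theorem mpw_eqOn_mixedPartial (f : smoothOn S) (a b : ℕ) :
    EqOn (mpw S a b f) (mixedPartial hS a b f : smoothOn S) S := by
  have h := iteratedFDerivWithin_eqOn_prod_dirDeriv hS f fun i : Fin (a + b) =>
    if (i : ℕ) < a then ((1 : ℝ), (0 : ℝ)) else (0, 1)
  simpa [List.ofFn_add, mixedPartial, mpw, EqOn] using h

theorem mixedPartial_mul_mixedPartial (hcl : S ⊆ closure (interior S)) (a b c d : ℕ) :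
    mixedPartial hS a b * mixedPartial hS c d = mixedPartial hS (a + c) (b + d) := by
  have hcomm := (commute_dirDeriv hS hcl (0, 1) (1, 0)).pow_pow b c
  simp only [mixedPartial, pow_add]
  exact hcomm.mul_mul_mul_comm _ _

theorem mixedPartial_mul (f g : smoothOn S) (a b : ℕ) :
    mixedPartial hS a b (f * g) =
      ∑ γ ∈ Finset.range (a + 1) ×ˢ Finset.range (b + 1), (a.choose γ.1 * b.choose γ.2) •
        (mixedPartial hS γ.1 γ.2 f * mixedPartial hS (a - γ.1) (b - γ.2) g) := by
  simp only [mixedPartial, Module.End.mul_apply, derivation_pow_mul, map_sum, ← nsmul_eq_mul,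
    map_nsmul, Finset.smul_sum, smul_smul, Finset.sum_product_right, mul_comm (b.choose _)]

end MixedPartial

section Strip

variable {p₀ : ℝ}

theorem strip_eq_univ_prod_Icc (p₀ : ℝ) : Strip p₀ = univ ×ˢ Icc p₀ 0 := by
  ext z
  simp [Strip]

theorem uniqueDiffOn_strip (hp₀ : p₀ < 0) : UniqueDiffOn ℝ (Strip p₀) :=
  strip_eq_univ_prod_Icc p₀ ▸ uniqueDiffOn_univ.prod (uniqueDiffOn_Icc hp₀)

theorem strip_subset_closure_interior (hp₀ : p₀ < 0) :
    Strip p₀ ⊆ closure (interior (Strip p₀)) := by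
  rw [strip_eq_univ_prod_Icc, interior_prod_eq, interior_univ, interior_Icc, closure_prod_eq,
    closure_univ, closure_Ioo hp₀.ne]

variable {f g : ℝ × ℝ → ℝ}

theorem pd_congr (hfg : EqOn f g (Strip p₀)) (a b : ℕ) :
    EqOn (pd p₀ a b f) (pd p₀ a b g) (Strip p₀) := fun z hz => by
  simp only [pd, mpw, iteratedFDerivWithin_congr hfg hz]

theorem pd_eqOn_mixedPartial (hp₀ : p₀ < 0) (f : smoothOn (Strip p₀)) (a b : ℕ) :
    EqOn (pd p₀ a b f) (mixedPartial (uniqueDiffOn_strip hp₀) a b f : smoothOn (Strip p₀))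
      (Strip p₀) :=
  mpw_eqOn_mixedPartial _ f a b

theorem contDiffOn_pd (hp₀ : p₀ < 0) (hf : ContDiffOn ℝ (⊤ : ℕ∞) f (Strip p₀)) (a b : ℕ) :
    ContDiffOn ℝ (⊤ : ℕ∞) (pd p₀ a b f) (Strip p₀) :=
  (smoothOn.contDiffOn _).congr (pd_eqOn_mixedPartial hp₀ ⟨f, hf⟩ a b)

theorem pd_pd (hp₀ : p₀ < 0) (hf : ContDiffOn ℝ (⊤ : ℕ∞) f (Strip p₀)) (a b c d : ℕ) :
    EqOn (pd p₀ a b (pd p₀ c d f)) (pd p₀ (a + c) (b + d) f) (Strip p₀) := fun z hz => by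
  rw [pd_congr (pd_eqOn_mixedPartial hp₀ ⟨f, hf⟩ c d) a b hz, pd_eqOn_mixedPartial hp₀ _ a b hz,
    pd_eqOn_mixedPartial hp₀ ⟨f, hf⟩ _ _ hz,
    ← mixedPartial_mul_mixedPartial _ (strip_subset_closure_interior hp₀), Module.End.mul_apply]

theorem pd_mul (hp₀ : p₀ < 0) (hf : ContDiffOn ℝ (⊤ : ℕ∞) f (Strip p₀))
    (hg : ContDiffOn ℝ (⊤ : ℕ∞) g (Strip p₀)) (a b : ℕ) :
    EqOn (pd p₀ a b (f * g))
      (fun z => ∑ γ ∈ Finset.range (a + 1) ×ˢ Finset.range (b + 1),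
        ((a.choose γ.1 * b.choose γ.2 : ℕ) : ℝ) *
          (pd p₀ γ.1 γ.2 f z * pd p₀ (a - γ.1) (b - γ.2) g z))
      (Strip p₀) := fun z hz => by
  let F : smoothOn (Strip p₀) := ⟨f, hf⟩
  let G : smoothOn (Strip p₀) := ⟨g, hg⟩
  have h := pd_eqOn_mixedPartial hp₀ (F * G) a b hz
  rw [mixedPartial_mul] at h
  simpa [F, G, pd_eqOn_mixedPartial hp₀ F _ _ hz, pd_eqOn_mixedPartial hp₀ G _ _ hz] using h

theorem supS_nonneg (p₀ : ℝ) (f : ℝ × ℝ → ℝ) : 0 ≤ supS p₀ f :=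
  Real.sSup_nonneg <| forall_mem_image.2 fun _ _ => abs_nonneg _

theorem abs_le_supS (hf : bddS p₀ f) {z : ℝ × ℝ} (hz : z ∈ Strip p₀) : |f z| ≤ supS p₀ f :=
  le_csSup hf (mem_image_of_mem _ hz)

theorem supS_le {C : ℝ} (hC : 0 ≤ C) (hf : ∀ z ∈ Strip p₀, |f z| ≤ C) : supS p₀ f ≤ C :=
  Real.sSup_le (forall_mem_image.2 hf) hC

theorem abs_image_strip_congr (hfg : EqOn f g (Strip p₀)) :
    (fun z => |f z|) '' Strip p₀ = (fun z => |g z|) '' Strip p₀ :=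
  image_congr fun _ hz => congrArg _ (hfg hz)

theorem supS_congr (hfg : EqOn f g (Strip p₀)) : supS p₀ f = supS p₀ g :=
  congrArg sSup (abs_image_strip_congr hfg)

theorem bddS_congr (hfg : EqOn f g (Strip p₀)) : bddS p₀ f ↔ bddS p₀ g := by
  rw [bddS, bddS, abs_image_strip_congr hfg]

theorem supS_pd_le_cknorm (p₀ : ℝ) (f : ℝ × ℝ → ℝ) {a b k : ℕ} (hab : a + b ≤ k) :
    supS p₀ (pd p₀ a b f) ≤ cknorm p₀ k f := by
  have hnonneg (i j : ℕ) : 0 ≤ supS p₀ (pd p₀ i j f) := supS_nonneg _ _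
  calc supS p₀ (pd p₀ a b f)
      ≤ ∑ j ∈ Finset.range (k + 1 - a), supS p₀ (pd p₀ a j f) :=
        Finset.single_le_sum (fun j _ => hnonneg a j) (Finset.mem_range.2 (by lia))
    _ ≤ cknorm p₀ k f :=
        Finset.single_le_sum (f := fun i => ∑ j ∈ Finset.range (k + 1 - i), supS p₀ (pd p₀ i j f))
          (fun i _ => Finset.sum_nonneg fun j _ => hnonneg i j) (Finset.mem_range.2 (by lia))

theorem supS_pd_mul_le (hp₀ : p₀ < 0) (hf : ContDiffOn ℝ (⊤ : ℕ∞) f (Strip p₀))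
    (hg : ContDiffOn ℝ (⊤ : ℕ∞) g (Strip p₀)) {a b : ℕ}
    (hbf : ∀ i ≤ a, ∀ j ≤ b, bddS p₀ (pd p₀ i j f))
    (hbg : ∀ i ≤ a, ∀ j ≤ b, bddS p₀ (pd p₀ i j g)) :
    supS p₀ (pd p₀ a b (f * g)) ≤
      ∑ γ ∈ Finset.range (a + 1) ×ˢ Finset.range (b + 1),
        ((a.choose γ.1 * b.choose γ.2 : ℕ) : ℝ) * supS p₀ (pd p₀ γ.1 γ.2 f) *
          supS p₀ (pd p₀ (a - γ.1) (b - γ.2) g) := by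
  refine supS_le (Finset.sum_nonneg fun γ _ => mul_nonneg
    (mul_nonneg (Nat.cast_nonneg _) (supS_nonneg _ _)) (supS_nonneg _ _)) fun z hz => ?_
  rw [pd_mul hp₀ hf hg a b hz]
  refine (Finset.abs_sum_le_sum_abs _ _).trans (Finset.sum_le_sum fun γ hγ => ?_)
  simp only [Finset.mem_product, Finset.mem_range_succ_iff] at hγ
  rw [abs_mul, abs_mul, Nat.abs_cast, mul_assoc]
  gcongr
  · exact supS_nonneg _ _
  · exact abs_le_supS (hbf _ hγ.1 _ hγ.2) hz
  · exact abs_le_supS (hbg _ (Nat.sub_le _ _) _ (Nat.sub_le _ _)) hz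

end Strip

section FactorialConvolution

theorem sum_choose_mul_choose_mul {R : Type*} [CommSemiring R] (F : ℕ → R) (a b : ℕ) :
    ∑ γ ∈ Finset.range (a + 1) ×ˢ Finset.range (b + 1),
        ((a.choose γ.1 * b.choose γ.2 : ℕ) : R) * F (γ.1 + γ.2) =
      ∑ k ∈ Finset.range (a + b + 1), ((a + b).choose k : R) * F k := by
  simp only [Finset.sum_product, Nat.cast_mul, mul_assoc, ← Finset.mul_sum]
  induction a generalizing F with
  | zero => simp
  | succ a ih =>
    have hshift := ih fun k => F (k + 1)
    rw [Finset.sum_choose_succ_mul fun i _ =>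
      ∑ j ∈ Finset.range (b + 1), (b.choose j : R) * F (i + j), ih, add_right_comm a 1 b,
      Finset.sum_choose_succ_mul fun k _ => F k, ← hshift]
    simp only [add_right_comm]

theorem factorial_sub_two_mul_le (j k : ℕ) : (j - 2)! * (k - 2)! ≤ (j + k - 2)! :=
  calc (j - 2)! * (k - 2)!
      ≤ (j - 2 + (k - 2))! :=
        Nat.le_of_dvd (Nat.factorial_pos _) (Nat.factorial_mul_factorial_dvd_factorial_add _ _)
    _ ≤ (j + k - 2)! := Nat.factorial_le (by lia)

theorem factorial_sub_two_le (k : ℕ) : ((k - 2)! : ℝ) ≤ 5 * k ! * (((k : ℝ) + 1) ^ 2)⁻¹ := by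
  rw [← div_eq_mul_inv, le_div_iff₀ (by positivity)]
  match k with
  | 0 => norm_num
  | 1 => norm_num
  | k + 2 =>
    have hpoly : ((k : ℝ) + 3) ^ 2 ≤ 5 * ((k + 2) * (k + 1)) := by
      nlinarith [(Nat.cast_nonneg k : (0 : ℝ) ≤ k)]
    calc ((k + 2 - 2)! : ℝ) * (((k + 2 : ℕ) : ℝ) + 1) ^ 2
        = (k ! : ℝ) * ((k : ℝ) + 3) ^ 2 := by rw [Nat.add_sub_cancel]; push_cast; ring
      _ ≤ (k ! : ℝ) * (5 * ((k + 2) * (k + 1))) := by gcongr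
      _ = 5 * ((k + 2)! : ℝ) := by simp only [Nat.factorial_succ]; push_cast; ring

theorem factorial_le_sq_mul_factorial_sub_two (k : ℕ) : k ! ≤ (k + 2) ^ 2 * (k - 2)! := by
  match k with
  | 0 => norm_num
  | 1 => norm_num
  | k + 2 =>
    calc (k + 2)! = (k + 2) * (k + 1) * k ! := by simp only [Nat.factorial_succ]; ring
      _ ≤ (k + 2 + 2) ^ 2 * k ! := by gcongr; nlinarith

theorem inv_sq_mul_inv_sq_le {x y : ℝ} (hx : 0 < x) (hy : 0 < y) :
    (x ^ 2)⁻¹ * (y ^ 2)⁻¹ ≤ 2 * ((x + y) ^ 2)⁻¹ * ((x ^ 2)⁻¹ + (y ^ 2)⁻¹) :=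
  calc (x ^ 2)⁻¹ * (y ^ 2)⁻¹
      = ((x + y) ^ 2)⁻¹ * (x⁻¹ + y⁻¹) ^ 2 := by field_simp; ring
    _ ≤ ((x + y) ^ 2)⁻¹ * (2 * ((x⁻¹) ^ 2 + (y⁻¹) ^ 2)) := by gcongr; exact add_sq_le
    _ = 2 * ((x + y) ^ 2)⁻¹ * ((x ^ 2)⁻¹ + (y ^ 2)⁻¹) := by rw [inv_pow, inv_pow]; ring

theorem sum_range_inv_succ_sq_le (N : ℕ) :
    ∑ k ∈ Finset.range N, (((k : ℝ) + 1) ^ 2)⁻¹ ≤ 2 := by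
  have h := sum_Ioo_inv_sq_le (α := ℝ) 0 (N + 1)
  rw [← Finset.Ico_add_one_left_eq_Ioo, Finset.sum_Ico_eq_sum_range] at h
  simpa [add_comm] using h

theorem choose_mul_factorial_sub_two_mul_le {N k : ℕ} (hk : k ≤ N) :
    (N.choose k : ℝ) * ((k - 2)! * (N - k - 2)! : ℝ) ≤
      50 * ((N ! : ℝ) * (((N : ℝ) + 2) ^ 2)⁻¹) *
        ((((k : ℝ) + 1) ^ 2)⁻¹ + ((((N - k : ℕ) : ℝ) + 1) ^ 2)⁻¹) := by
  have hN : (N : ℝ) + 2 = ((k : ℝ) + 1) + (((N - k : ℕ) : ℝ) + 1) := by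
    rw [Nat.cast_sub hk]; ring
  have hfact : (N.choose k : ℝ) * k ! * (N - k)! = N ! := by
    exact_mod_cast Nat.choose_mul_factorial_mul_factorial hk
  have hx : (0 : ℝ) < k + 1 := by positivity
  have hy : (0 : ℝ) < (N - k : ℕ) + 1 := by positivity
  rw [hN]
  set x : ℝ := (k : ℝ) + 1
  set y : ℝ := ((N - k : ℕ) : ℝ) + 1
  calc (N.choose k : ℝ) * ((k - 2)! * (N - k - 2)! : ℝ)
      ≤ N.choose k * (5 * (k ! : ℝ) * (x ^ 2)⁻¹ * (5 * ((N - k)! : ℝ) * (y ^ 2)⁻¹)) := by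
        gcongr
        · exact factorial_sub_two_le k
        · exact factorial_sub_two_le (N - k)
    _ = 25 * (N ! : ℝ) * ((x ^ 2)⁻¹ * (y ^ 2)⁻¹) := by rw [← hfact]; ring
    _ ≤ 25 * (N ! : ℝ) * (2 * ((x + y) ^ 2)⁻¹ * ((x ^ 2)⁻¹ + (y ^ 2)⁻¹)) :=
        mul_le_mul_of_nonneg_left (inv_sq_mul_inv_sq_le hx hy) (by positivity)
    _ = 50 * ((N ! : ℝ) * ((x + y) ^ 2)⁻¹) * ((x ^ 2)⁻¹ + (y ^ 2)⁻¹) := by ring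

theorem sum_choose_mul_factorial_sub_two_mul_le (N : ℕ) :
    ∑ k ∈ Finset.range (N + 1), (N.choose k : ℝ) * ((k - 2)! * (N - k - 2)! : ℝ) ≤
      200 * ((N - 2)! : ℝ) := by
  have hreflect : ∑ k ∈ Finset.range (N + 1), ((((N - k : ℕ) : ℝ) + 1) ^ 2)⁻¹ =
      ∑ k ∈ Finset.range (N + 1), (((k : ℝ) + 1) ^ 2)⁻¹ := by
    simpa using Finset.sum_range_reflect (fun k : ℕ => (((k : ℝ) + 1) ^ 2)⁻¹) (N + 1)
  have hfact : (N ! : ℝ) ≤ (N + 2) ^ 2 * (N - 2)! := by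
    exact_mod_cast factorial_le_sq_mul_factorial_sub_two N
  calc ∑ k ∈ Finset.range (N + 1), (N.choose k : ℝ) * ((k - 2)! * (N - k - 2)! : ℝ)
      ≤ ∑ k ∈ Finset.range (N + 1), 50 * ((N ! : ℝ) * (((N : ℝ) + 2) ^ 2)⁻¹) *
          ((((k : ℝ) + 1) ^ 2)⁻¹ + ((((N - k : ℕ) : ℝ) + 1) ^ 2)⁻¹) :=
        Finset.sum_le_sum fun k hk =>
          choose_mul_factorial_sub_two_mul_le (Finset.mem_range_succ_iff.1 hk)
    _ = 50 * ((N ! : ℝ) * (((N : ℝ) + 2) ^ 2)⁻¹) *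
          (2 * ∑ k ∈ Finset.range (N + 1), (((k : ℝ) + 1) ^ 2)⁻¹) := by
        rw [← Finset.mul_sum, Finset.sum_add_distrib, hreflect, two_mul]
    _ ≤ 50 * (((N : ℝ) + 2) ^ 2 * ((N - 2)! : ℝ) * (((N : ℝ) + 2) ^ 2)⁻¹) * (2 * 2) := by
        gcongr
        exact sum_range_inv_succ_sq_le _
    _ = 200 * ((N - 2)! : ℝ) := by field_simp; norm_num

theorem rpow_le_mul_rpow_sub_one {x y s : ℝ} (hx : 0 < x) (hxy : x ≤ y) (hs : 1 ≤ s) :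
    x ^ s ≤ x * y ^ (s - 1) :=
  calc x ^ s = x * x ^ (s - 1) := by rw [Real.rpow_sub_one hx.ne', mul_div_cancel₀ _ hx.ne']
    _ ≤ x * y ^ (s - 1) := by gcongr

theorem sum_choose_mul_rpow_factorial_sub_two_mul_le {s : ℝ} (hs : 1 ≤ s) (N : ℕ) :
    ∑ k ∈ Finset.range (N + 1), (N.choose k : ℝ) * ((k - 2)! * (N - k - 2)! : ℝ) ^ s ≤
      200 * ((N - 2)! : ℝ) ^ s := by
  have hpos (k : ℕ) : (0 : ℝ) < k ! := by exact_mod_cast k.factorial_pos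
  calc ∑ k ∈ Finset.range (N + 1), (N.choose k : ℝ) * ((k - 2)! * (N - k - 2)! : ℝ) ^ s
      ≤ ∑ k ∈ Finset.range (N + 1),
          (N.choose k : ℝ) * ((k - 2)! * (N - k - 2)! * ((N - 2)! : ℝ) ^ (s - 1)) := by
        gcongr with k hk
        have hle := factorial_sub_two_mul_le k (N - k)
        rw [Nat.add_sub_cancel' (Finset.mem_range_succ_iff.1 hk)] at hle
        exact rpow_le_mul_rpow_sub_one (mul_pos (hpos _) (hpos _)) (by exact_mod_cast hle) hs
    _ = (∑ k ∈ Finset.range (N + 1), (N.choose k : ℝ) * ((k - 2)! * (N - k - 2)! : ℝ)) *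
          ((N - 2)! : ℝ) ^ (s - 1) := by simp only [Finset.sum_mul, mul_assoc]
    _ ≤ 200 * ((N - 2)! : ℝ) * ((N - 2)! : ℝ) ^ (s - 1) := by
        gcongr
        exact sum_choose_mul_factorial_sub_two_mul_le N
    _ = 200 * ((N - 2)! : ℝ) ^ s := by
        rw [Real.rpow_sub_one (hpos _).ne', mul_assoc, mul_div_cancel₀ _ (hpos _).ne']

end FactorialConvolution

section GevreyWeight

/-- The Gevrey majorant `L₁^(i-d) L₂^j ((i+j-2)!)^s` of a derivative `∂_q^i ∂_p^j f`, where `d` is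
the number of powers of `L₁` that `f` gains. The gain is capped by the order `i + j`, so that the
weight is at least `1` and a bounded function needs no separate treatment at low orders. -/
def gevreyWeight (s L₁ L₂ : ℝ) (d i j : ℕ) : ℝ :=
  L₁ ^ ((i : ℤ) - (min (i + j) d : ℕ)) * L₂ ^ j * ((i + j - 2)! : ℝ) ^ s

variable {s L₁ L₂ : ℝ}

theorem gevreyWeight_nonneg (hL₁ : 0 ≤ L₁) (hL₂ : 0 ≤ L₂) (d i j : ℕ) :
    0 ≤ gevreyWeight s L₁ L₂ d i j := by
  unfold gevreyWeight
  positivity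

theorem one_le_gevreyWeight (hs : 0 ≤ s) (hL₁ : 1 ≤ L₁) (hL₁₂ : L₁ ≤ L₂) (d i j : ℕ) :
    1 ≤ gevreyWeight s L₁ L₂ d i j := by
  have hpow : 1 ≤ L₁ ^ ((i : ℤ) - (min (i + j) d : ℕ)) * L₂ ^ j :=
    calc 1 ≤ L₁ ^ ((i : ℤ) - (min (i + j) d : ℕ) + j) := one_le_zpow₀ hL₁ (by lia)
      _ = L₁ ^ ((i : ℤ) - (min (i + j) d : ℕ)) * L₁ ^ j := by
        rw [zpow_add₀ (by positivity), zpow_natCast]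
      _ ≤ L₁ ^ ((i : ℤ) - (min (i + j) d : ℕ)) * L₂ ^ j := by gcongr
  exact one_le_mul_of_one_le_of_one_le hpow
    (Real.one_le_rpow (by exact_mod_cast Nat.one_le_iff_ne_zero.2 (Nat.factorial_ne_zero _)) hs)

theorem gevreyWeight_one_le_gevreyWeight_two_succ_left (hs : 0 ≤ s) (hL₁ : 0 ≤ L₁) (hL₂ : 0 ≤ L₂)
    {i j : ℕ} (hij : 1 ≤ i + j) :
    gevreyWeight s L₁ L₂ 1 i j ≤ gevreyWeight s L₁ L₂ 2 (i + 1) j := by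
  rw [gevreyWeight, gevreyWeight, min_eq_right hij, min_eq_right (by lia : 2 ≤ i + 1 + j),
    show ((i + 1 : ℕ) : ℤ) - (2 : ℕ) = i - (1 : ℕ) by lia]
  gcongr
  lia

theorem gevreyWeight_one_le_gevreyWeight_two_succ_right (hs : 0 ≤ s) (hL₁ : 0 < L₁)
    (hL₁₂ : L₁ ≤ L₂) {i j : ℕ} (hij : 1 ≤ i + j) :
    gevreyWeight s L₁ L₂ 1 i j ≤ gevreyWeight s L₁ L₂ 2 i (j + 1) := by
  have hL₂ : 0 < L₂ := hL₁.trans_le hL₁₂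
  have hpow : L₁ ^ ((i : ℤ) - (1 : ℕ)) * L₂ ^ j ≤ L₁ ^ ((i : ℤ) - (2 : ℕ)) * L₂ ^ (j + 1) :=
    calc L₁ ^ ((i : ℤ) - (1 : ℕ)) * L₂ ^ j
        = L₁ ^ ((i : ℤ) - (2 : ℕ)) * (L₂ ^ j * L₁) := by
          rw [show (i : ℤ) - (1 : ℕ) = i - (2 : ℕ) + 1 by lia, zpow_add_one₀ hL₁.ne']
          ring
      _ ≤ L₁ ^ ((i : ℤ) - (2 : ℕ)) * (L₂ ^ j * L₂) := by gcongr
      _ = L₁ ^ ((i : ℤ) - (2 : ℕ)) * L₂ ^ (j + 1) := by rw [pow_succ]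
  rw [gevreyWeight, gevreyWeight, min_eq_right hij, min_eq_right (by lia : 2 ≤ i + (j + 1))]
  gcongr
  lia

theorem gevreyWeight_mul_le (hL₁ : 1 ≤ L₁) (hL₂ : 0 ≤ L₂) {d e D a b i j : ℕ} (hi : i ≤ a)
    (hj : j ≤ b) (hgain : min (a + b) D ≤ min (i + j) d + min (a - i + (b - j)) e) :
    gevreyWeight s L₁ L₂ d i j * gevreyWeight s L₁ L₂ e (a - i) (b - j) ≤
      L₁ ^ ((a : ℤ) - (min (a + b) D : ℕ)) * L₂ ^ b *
        ((i + j - 2)! * (a + b - (i + j) - 2)! : ℝ) ^ s :=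
  calc gevreyWeight s L₁ L₂ d i j * gevreyWeight s L₁ L₂ e (a - i) (b - j)
      = L₁ ^ ((a : ℤ) - (min (i + j) d + min (a - i + (b - j)) e : ℕ)) * L₂ ^ b *
          ((i + j - 2)! * (a + b - (i + j) - 2)! : ℝ) ^ s := by
        have hexp : (a : ℤ) - (min (i + j) d + min (a - i + (b - j)) e : ℕ) =
            (i - (min (i + j) d : ℕ)) + ((a - i : ℕ) - (min (a - i + (b - j)) e : ℕ)) := by lia
        rw [hexp, zpow_add₀ (by positivity), ← pow_mul_pow_sub L₂ hj,
          show a + b - (i + j) = a - i + (b - j) by lia,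
          Real.mul_rpow (Nat.cast_nonneg _) (Nat.cast_nonneg _), gevreyWeight, gevreyWeight]
        ring
    _ ≤ _ := by
        gcongr ?_ * _ * _
        exact zpow_le_zpow_right₀ hL₁ (by lia)

theorem sum_choose_mul_mul_le_gevreyWeight (hs : 1 ≤ s) (hL₁ : 1 ≤ L₁) (hL₂ : 0 ≤ L₂) {A B : ℝ}
    (hA : 0 ≤ A) (hB : 0 ≤ B) {a b d e D : ℕ} {u v : ℕ → ℕ → ℝ} (hv_nonneg : ∀ i j, 0 ≤ v i j)
    {T : Finset (ℕ × ℕ)} (hT : T ⊆ Finset.range (a + 1) ×ˢ Finset.range (b + 1))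
    (hu : ∀ γ ∈ T, u γ.1 γ.2 ≤ A * gevreyWeight s L₁ L₂ d γ.1 γ.2)
    (hv : ∀ γ ∈ T,
      v (a - γ.1) (b - γ.2) ≤ B * gevreyWeight s L₁ L₂ e (a - γ.1) (b - γ.2))
    (hgain : ∀ γ ∈ T, min (a + b) D ≤ min (γ.1 + γ.2) d + min (a - γ.1 + (b - γ.2)) e) :
    ∑ γ ∈ T, ((a.choose γ.1 * b.choose γ.2 : ℕ) : ℝ) * u γ.1 γ.2 * v (a - γ.1) (b - γ.2) ≤
      200 * (A * B) * gevreyWeight s L₁ L₂ D a b := by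
  let F : ℕ → ℝ := fun k => ((k - 2)! * (a + b - k - 2)! : ℝ) ^ s
  let P : ℝ := A * B * (L₁ ^ ((a : ℤ) - (min (a + b) D : ℕ)) * L₂ ^ b)
  have hterm : ∀ γ ∈ T, u γ.1 γ.2 * v (a - γ.1) (b - γ.2) ≤ P * F (γ.1 + γ.2) := by
    rintro ⟨i, j⟩ hγ
    obtain ⟨hi, hj⟩ : i ≤ a ∧ j ≤ b := by
      simpa [Finset.mem_range_succ_iff] using hT hγ
    have hweight := gevreyWeight_mul_le (s := s) hL₁ hL₂ hi hj (hgain _ hγ)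
    calc u i j * v (a - i) (b - j)
        ≤ (A * gevreyWeight s L₁ L₂ d i j) * (B * gevreyWeight s L₁ L₂ e (a - i) (b - j)) :=
          mul_le_mul (hu _ hγ) (hv _ hγ) (hv_nonneg _ _)
            (mul_nonneg hA (gevreyWeight_nonneg (by positivity) hL₂ _ _ _))
      _ = A * B * (gevreyWeight s L₁ L₂ d i j * gevreyWeight s L₁ L₂ e (a - i) (b - j)) := by ring
      _ ≤ P * F (i + j) :=
          (mul_le_mul_of_nonneg_left hweight (mul_nonneg hA hB)).trans_eq (mul_assoc _ _ _).symm
  calc ∑ γ ∈ T, ((a.choose γ.1 * b.choose γ.2 : ℕ) : ℝ) * u γ.1 γ.2 * v (a - γ.1) (b - γ.2)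
      ≤ ∑ γ ∈ T, P * (((a.choose γ.1 * b.choose γ.2 : ℕ) : ℝ) * F (γ.1 + γ.2)) :=
        Finset.sum_le_sum fun γ hγ => by
          rw [mul_assoc, mul_left_comm P]
          exact mul_le_mul_of_nonneg_left (hterm γ hγ) (Nat.cast_nonneg _)
    _ ≤ ∑ γ ∈ Finset.range (a + 1) ×ˢ Finset.range (b + 1),
          P * (((a.choose γ.1 * b.choose γ.2 : ℕ) : ℝ) * F (γ.1 + γ.2)) :=
        Finset.sum_le_sum_of_subset_of_nonneg hT fun _ _ _ => by positivity
    _ = P * ∑ k ∈ Finset.range (a + b + 1), ((a + b).choose k : ℝ) * F k := by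
        rw [← Finset.mul_sum, sum_choose_mul_choose_mul]
    _ ≤ P * (200 * ((a + b - 2)! : ℝ) ^ s) := by
        gcongr
        exact sum_choose_mul_rpow_factorial_sub_two_mul_le hs (a + b)
    _ = 200 * (A * B) * gevreyWeight s L₁ L₂ D a b := by simp only [P, gevreyWeight]; ring

end GevreyWeight

section GevreyBounds

/-- Part (i) of `IndBounds`, with `N` in place of `m`: the Gevrey bounds on the derivatives of `h`
of all orders from `2` to `N - 1`. -/
def GevreyBoundsBelow (p₀ s L₁ L₂ : ℝ) (N : ℕ) (h : ℝ × ℝ → ℝ) : Prop :=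
  ∀ i j : ℕ, 2 ≤ i + j → i + j < N →
    cknorm p₀ 2 (pd p₀ i j h) ≤ L₁ ^ ((i : ℤ) - 1) * L₂ ^ j * ((i + j - 2)! : ℝ) ^ s

variable {p₀ s K L₁ L₂ : ℝ} {h : ℝ × ℝ → ℝ} {N i j : ℕ}

theorem supS_pd_le_mul_gevreyWeight_of_le (hs : 0 ≤ s) (hL₁ : 1 ≤ L₁) (hL₁₂ : L₁ ≤ L₂) {k : ℕ}
    (hK : cknorm p₀ k h ≤ K) (hij : i + j ≤ k) (d a b : ℕ) :
    supS p₀ (pd p₀ i j h) ≤ K * gevreyWeight s L₁ L₂ d a b := by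
  have hbound : supS p₀ (pd p₀ i j h) ≤ K := (supS_pd_le_cknorm p₀ h hij).trans hK
  exact hbound.trans <| le_mul_of_one_le_right ((supS_nonneg _ _).trans hbound)
    (one_le_gevreyWeight hs hL₁ hL₁₂ d a b)

namespace GevreyBoundsBelow

theorem supS_pd_add_le (hI : GevreyBoundsBelow p₀ s L₁ L₂ N h) (hp₀ : p₀ < 0)
    (hh : ContDiffOn ℝ (⊤ : ℕ∞) h (Strip p₀)) (hij : 2 ≤ i + j) (hijN : i + j < N) {c d : ℕ}
    (hcd : c + d ≤ 2) :
    supS p₀ (pd p₀ (c + i) (d + j) h) ≤ gevreyWeight s L₁ L₂ 1 i j := by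
  rw [← supS_congr (pd_pd hp₀ hh c d i j), gevreyWeight, min_eq_right (by lia : 1 ≤ i + j)]
  exact (supS_pd_le_cknorm p₀ _ hcd).trans (hI i j hij hijN)

theorem supS_pd_h_q_le (hI : GevreyBoundsBelow p₀ s L₁ L₂ N h) (hp₀ : p₀ < 0) (hs : 0 ≤ s)
    (hL₁ : 1 ≤ L₁) (hL₁₂ : L₁ ≤ L₂) (hh : ContDiffOn ℝ (⊤ : ℕ∞) h (Strip p₀)) (hK1 : 1 ≤ K)
    (hK : cknorm p₀ 4 h ≤ K) (hij : i + j ≤ N) :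
    supS p₀ (pd p₀ i j (pd p₀ 1 0 h)) ≤ K * gevreyWeight s L₁ L₂ 2 i j := by
  rw [supS_congr (pd_pd hp₀ hh i j 1 0), add_zero]
  have hL₁_pos : 0 < L₁ := by positivity
  have hL₂ : 0 ≤ L₂ := hL₁_pos.le.trans hL₁₂
  obtain hlow | hhigh := le_or_gt (i + j) 3
  · exact supS_pd_le_mul_gevreyWeight_of_le hs hL₁ hL₁₂ hK (by lia) 2 i j
  suffices supS p₀ (pd p₀ (i + 1) j h) ≤ gevreyWeight s L₁ L₂ 2 i j from
    this.trans (le_mul_of_one_le_left (gevreyWeight_nonneg hL₁_pos.le hL₂ 2 i j) hK1)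
  match i, j with
  | i + 1, j =>
    calc supS p₀ (pd p₀ (i + 1 + 1) j h)
        = supS p₀ (pd p₀ (2 + i) (0 + j) h) := by rw [zero_add, add_comm 2 i]
      _ ≤ gevreyWeight s L₁ L₂ 1 i j := hI.supS_pd_add_le hp₀ hh (by lia) (by lia) le_rfl
      _ ≤ gevreyWeight s L₁ L₂ 2 (i + 1) j :=
        gevreyWeight_one_le_gevreyWeight_two_succ_left hs hL₁_pos.le hL₂ (by lia)
  | 0, j + 1 =>
    calc supS p₀ (pd p₀ (0 + 1) (j + 1) h)
        = supS p₀ (pd p₀ (1 + 0) (1 + j) h) := by rw [add_comm 0 1, add_comm 1 j]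
      _ ≤ gevreyWeight s L₁ L₂ 1 0 j := hI.supS_pd_add_le hp₀ hh (by lia) (by lia) le_rfl
      _ ≤ gevreyWeight s L₁ L₂ 2 0 (j + 1) :=
        gevreyWeight_one_le_gevreyWeight_two_succ_right hs hL₁_pos hL₁₂ (by lia)

theorem supS_pd_h_pp_le (hI : GevreyBoundsBelow p₀ s L₁ L₂ N h) (hp₀ : p₀ < 0) (hs : 0 ≤ s)
    (hL₁ : 1 ≤ L₁) (hL₁₂ : L₁ ≤ L₂) (hh : ContDiffOn ℝ (⊤ : ℕ∞) h (Strip p₀)) (hK1 : 1 ≤ K)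
    (hK : cknorm p₀ 4 h ≤ K) (hij : i + j < N) :
    supS p₀ (pd p₀ i j (pd p₀ 0 2 h)) ≤ K * gevreyWeight s L₁ L₂ 1 i j := by
  rw [supS_congr (pd_pd hp₀ hh i j 0 2), add_comm i, add_comm j]
  obtain hlow | hhigh := le_or_gt (i + j) 2
  · exact supS_pd_le_mul_gevreyWeight_of_le hs hL₁ hL₁₂ hK (by lia) 1 i j
  · exact (hI.supS_pd_add_le hp₀ hh hhigh.le hij le_rfl).trans <|
      le_mul_of_one_le_left (gevreyWeight_nonneg (by positivity) (by linarith) 1 i j) hK1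

theorem supS_pd_h_q_sq_le (hI : GevreyBoundsBelow p₀ s L₁ L₂ N h) (hp₀ : p₀ < 0) (hs : 1 ≤ s)
    (hL₁ : 1 ≤ L₁) (hL₁₂ : L₁ ≤ L₂) (hh : ContDiffOn ℝ (⊤ : ℕ∞) h (Strip p₀))
    (hbdd : ∀ i j, bddS p₀ (pd p₀ i j h)) (hK1 : 1 ≤ K) (hK : cknorm p₀ 4 h ≤ K)
    (hij : i + j ≤ N) :
    supS p₀ (pd p₀ i j (fun z => pd p₀ 1 0 h z ^ 2)) ≤
      200 * (K * K) * gevreyWeight s L₁ L₂ 2 i j := by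
  have hsq : (fun z => pd p₀ 1 0 h z ^ 2) = pd p₀ 1 0 h * pd p₀ 1 0 h :=
    funext fun z => sq (pd p₀ 1 0 h z)
  have hh_q : ContDiffOn ℝ (⊤ : ℕ∞) (pd p₀ 1 0 h) (Strip p₀) := contDiffOn_pd hp₀ hh 1 0
  have hbdd_q (k l : ℕ) : bddS p₀ (pd p₀ k l (pd p₀ 1 0 h)) :=
    (bddS_congr (pd_pd hp₀ hh k l 1 0)).2 (hbdd _ _)
  have hle_q {k l : ℕ} (hkl : k + l ≤ N) :
      supS p₀ (pd p₀ k l (pd p₀ 1 0 h)) ≤ K * gevreyWeight s L₁ L₂ 2 k l :=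
    hI.supS_pd_h_q_le hp₀ (by positivity) hL₁ hL₁₂ hh hK1 hK hkl
  rw [hsq]
  refine (supS_pd_mul_le hp₀ hh_q hh_q (fun k _ l _ => hbdd_q k l) fun k _ l _ => hbdd_q k l).trans
    <| sum_choose_mul_mul_le_gevreyWeight (u := fun k l => supS p₀ (pd p₀ k l (pd p₀ 1 0 h)))
      (v := fun k l => supS p₀ (pd p₀ k l (pd p₀ 1 0 h))) (d := 2) (e := 2) hs hL₁ (by linarith)
      (by positivity) (by positivity) (fun _ _ => supS_nonneg _ _) subset_rfl ?_ ?_ ?_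
  all_goals
    simp only [Finset.mem_product, Finset.mem_range_succ_iff]
    intro γ hγ
  · exact hle_q (by lia)
  · exact hle_q (by lia)
  · lia

end GevreyBoundsBelow

end GevreyBounds

theorem leibniz_sum_hq_sq_hpp_bound_general {p₀ s K L₁ L₂ : ℝ} {a b : ℕ} {h : ℝ × ℝ → ℝ}
    (hp₀ : p₀ < 0) (hs : 1 ≤ s) (hab : 2 ≤ a + b) (hL₁ : 1 ≤ L₁) (hL₁₂ : L₁ ≤ L₂)
    (hh : ContDiffOn ℝ (⊤ : ℕ∞) h (Strip p₀)) (hbdd : ∀ i j, bddS p₀ (pd p₀ i j h))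
    (hK1 : 1 ≤ K) (hK : cknorm p₀ 4 h ≤ K) (hI : GevreyBoundsBelow p₀ s L₁ L₂ (a + b) h) :
    ∑ γ ∈ (Finset.range (a + 1) ×ˢ Finset.range (b + 1)).filter (fun γ => γ ≠ (0, 0)),
        ((a.choose γ.1 * b.choose γ.2 : ℕ) : ℝ) *
          supS p₀ (pd p₀ γ.1 γ.2 (fun z => pd p₀ 1 0 h z ^ 2)) *
          supS p₀ (pd p₀ (a - γ.1) (b - γ.2) (pd p₀ 0 2 h)) ≤
      40000 * K ^ 3 * L₁ ^ ((a : ℤ) - 2) * L₂ ^ b * ((a + b - 2)! : ℝ) ^ s := by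
  have hsum := sum_choose_mul_mul_le_gevreyWeight (s := s) (L₂ := L₂) (A := 200 * (K * K)) (B := K)
    (a := a) (b := b) (d := 2) (e := 1) (D := 2)
    (u := fun i j => supS p₀ (pd p₀ i j (fun z => pd p₀ 1 0 h z ^ 2)))
    (v := fun i j => supS p₀ (pd p₀ i j (pd p₀ 0 2 h)))
    hs hL₁ (by linarith) (by positivity) (by positivity) (fun _ _ => supS_nonneg _ _)
    (Finset.filter_subset (fun γ => γ ≠ (0, 0)) _) ?_ ?_ ?_
  · rw [gevreyWeight, min_eq_right hab] at hsum
    refine hsum.trans_eq ?_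
    push_cast
    ring
  all_goals
    simp only [Finset.mem_filter, Finset.mem_product, Finset.mem_range_succ_iff, ne_eq,
      Prod.ext_iff]
    intro γ hγ
  · exact hI.supS_pd_h_q_sq_le hp₀ hs hL₁ hL₁₂ hh hbdd hK1 hK (by lia)
  · exact hI.supS_pd_h_pp_le hp₀ (by positivity) hL₁ hL₁₂ hh hK1 hK (by lia)
  · lia

/-- Lemma 4.1-type estimate: under the inductive Gevrey bounds, the Leibniz sum
`Σ_{γ≤α, γ≠0} C(α,γ) ‖∂^γ(h_q²)‖₀ ‖∂^{α−γ} h_{pp}‖₀` with `α = (m−n, n)` is bounded by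
`c₁ L₁^{α₁−2} L₂^{α₂} [(|α|−2)!]^s`, with `c₁` independent of `m, n, L₁, L₂`. -/
theorem leibniz_sum_hq_sq_hpp_bound (p₀ μ s K : ℝ) (hp₀ : p₀ < 0)
    (hμ : μ ∈ Set.Ioo (0 : ℝ) 1) (hs : 1 ≤ s) :
    ∃ c₁ : ℝ, 1 ≤ c₁ ∧ ∀ (m n : ℕ) (L₁ L₂ : ℝ) (h : ℝ × ℝ → ℝ),
      3 ≤ m → 1 ≤ n → n ≤ m → 1 ≤ L₁ → L₁ ≤ L₂ →
      ContDiffOn ℝ (⊤ : ℕ∞) h (Strip p₀) →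
      (∀ a b : ℕ, bddS p₀ (pd p₀ a b h)) →
      cknorm p₀ 4 h ≤ K → hnorm p₀ μ 2 (pd p₀ 1 0 h) ≤ K →
      IndBounds p₀ s L₁ L₂ m n h →
      ∑ γ ∈ ((Finset.range (m - n + 1)) ×ˢ (Finset.range (n + 1))).filter
            (fun γ => γ ≠ (0, 0)),
          ((Nat.choose (m - n) γ.1 * Nat.choose n γ.2 : ℕ) : ℝ)
            * supS p₀ (pd p₀ γ.1 γ.2 (fun z => (pd p₀ 1 0 h z) ^ 2))
            * supS p₀ (pd p₀ (m - n - γ.1) (n - γ.2) (pd p₀ 0 2 h))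
        ≤ c₁ * L₁ ^ ((m : ℤ) - (n : ℤ) - 2) * L₂ ^ n * (Nat.factorial (m - 2) : ℝ) ^ s := by
  refine ⟨40000 * max 1 K ^ 3, ?_, fun m n L₁ L₂ h hm _ hnm hL₁ hL₁₂ hh hbdd hK _ hI => ?_⟩
  · linarith [one_le_pow₀ (n := 3) (le_max_left 1 K)]
  obtain ⟨a, rfl⟩ := Nat.exists_eq_add_of_le' hnm
  have hbelow : GevreyBoundsBelow p₀ s L₁ L₂ (a + n) h := fun i j hij hlt =>
    hI.1 i j hij (Nat.le_sub_one_of_lt hlt)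
  simpa only [Nat.add_sub_cancel, Nat.cast_add, add_sub_cancel_right] using
    leibniz_sum_hq_sq_hpp_bound_general hp₀ hs (by lia) hL₁ hL₁₂ hh hbdd (le_max_left 1 K)
      (hK.trans (le_max_right 1 K)) hbelow
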